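/- Let m : ℝ with m > 1, and let G be a subgroup of SL(2, ℝ) (the special linear group of 2×2 real matrices, with its topology as a topological group) such that G with the subspace topology is discrete. Suppose the matrix diag(m, m⁻¹) (i.e. !![m, 0; 0, m⁻¹]) belongs to G. Then every element A of G that is triangular is in fact diagonal: if A ∈ G satisfies A₁₀ = 0 or A₀₁ = 0, then A₁₀ = 0 and A₀₁ = 0. -/

import Mathlib

open Matrix MatrixGroups

noncomputable instance : TopologicalSpace (SL(2, ℝ)) :=
  TopologicalSpace.induced (fun A => (A : Matrix (Fin 2) (Fin 2) ℝ)) inferInstance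

/-!
If `g` and `h` lie in a discrete subgroup of a topological group and `g ^ k * h * (g ^ k)⁻¹`
converges, then this sequence is eventually constant, and equality of two consecutive terms says
that `g` commutes with `h`. For `g` diagonal with entries `d i`, conjugation by `g ^ k` multiplies
the `(i, j)` entry by `(d i / d j) ^ k`, so for triangular `h` the conjugates by powers of `g` or of
`g⁻¹` converge, while commuting with `g` kills every entry with `d i ≠ d j`.
-/

open Filter Topology

section DiscreteSubgroup

variable {H : Type*} [Group H] [TopologicalSpace H] {Γ : Subgroup H} [DiscreteTopology Γ]

theorem eventually_eq_one_of_tendsto_one {u : ℕ → H} (hu : ∀ k, u k ∈ Γ)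
    (hlim : Tendsto u atTop (𝓝 1)) : ∀ᶠ k in atTop, u k = 1 := by
  have hΓ : Tendsto (fun k => (⟨u k, hu k⟩ : Γ)) atTop (𝓝 1) := tendsto_subtype_rng.2 hlim
  rw [nhds_discrete, tendsto_pure] at hΓ
  exact hΓ.mono fun _ hk => congrArg Subtype.val hk

variable [IsTopologicalGroup H]

theorem eventually_succ_eq_of_tendsto {u : ℕ → H} {l : H} (hu : ∀ k, u k ∈ Γ)
    (hlim : Tendsto u atTop (𝓝 l)) : ∀ᶠ k in atTop, u (k + 1) = u k := by
  have hdiv : Tendsto (fun k => u (k + 1) / u k) atTop (𝓝 1) := by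
    simpa only [div_self'] using ((tendsto_add_atTop_iff_nat 1).2 hlim).div' hlim
  exact (eventually_eq_one_of_tendsto_one (fun k => Γ.div_mem (hu (k + 1)) (hu k)) hdiv).mono
    fun _ => div_eq_one.1

theorem commute_of_tendsto_conj_pow {g h l : H} (hg : g ∈ Γ) (hh : h ∈ Γ)
    (hlim : Tendsto (fun k : ℕ => g ^ k * h * (g ^ k)⁻¹) atTop (𝓝 l)) : Commute g h := by
  have hmem (k : ℕ) : g ^ k * h * (g ^ k)⁻¹ ∈ Γ :=
    Γ.mul_mem (Γ.mul_mem (Γ.pow_mem hg k) hh) (Γ.inv_mem (Γ.pow_mem hg k))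
  obtain ⟨k, hk⟩ := (eventually_succ_eq_of_tendsto hmem hlim).exists
  have hconj : g ^ k * (g * h * g⁻¹) * (g ^ k)⁻¹ = g ^ k * h * (g ^ k)⁻¹ := by
    rw [← hk, pow_succ]
    group
  exact mul_inv_eq_iff_eq_mul.1 (mul_left_cancel (mul_right_cancel hconj))

end DiscreteSubgroup

section DiagonalConjugation

variable {n K : Type*} [Fintype n] [DecidableEq n]

theorem ne_zero_of_coe_eq_diagonal [Field K] {D : Matrix.SpecialLinearGroup n K} {d : n → K}
    (hD : (D : Matrix n n K) = diagonal d) (i : n) : d i ≠ 0 := by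
  have hdet : ∏ i, d i = 1 := by rw [← det_diagonal, ← hD, D.det_coe]
  exact Finset.prod_ne_zero_iff.1 (hdet ▸ one_ne_zero) i (Finset.mem_univ i)

theorem coe_inv_of_coe_eq_diagonal [Field K] {D : Matrix.SpecialLinearGroup n K} {d : n → K}
    (hD : (D : Matrix n n K) = diagonal d) :
    ((D⁻¹ : Matrix.SpecialLinearGroup n K) : Matrix n n K) = diagonal d⁻¹ := by
  have hmul : (D : Matrix n n K) * diagonal d⁻¹ = 1 := by
    rw [hD, diagonal_mul_diagonal, ← diagonal_one]
    exact congrArg diagonal <| funext fun i =>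
      mul_inv_cancel₀ (ne_zero_of_coe_eq_diagonal hD i)
  have hinv : ((D⁻¹ : Matrix.SpecialLinearGroup n K) : Matrix n n K) * D = 1 := by
    rw [← Matrix.SpecialLinearGroup.coe_mul, inv_mul_cancel, Matrix.SpecialLinearGroup.coe_one]
  exact left_inv_eq_right_inv hinv hmul

theorem conj_diagonal_pow_apply [Field K] {D : Matrix.SpecialLinearGroup n K} {d : n → K}
    (hD : (D : Matrix n n K) = diagonal d) (A : Matrix.SpecialLinearGroup n K) (k : ℕ) (i j : n) :
    (D ^ k * A * (D ^ k)⁻¹ : Matrix.SpecialLinearGroup n K) i j = (d i / d j) ^ k * A i j := by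
  have hDk : ((D ^ k : Matrix.SpecialLinearGroup n K) : Matrix n n K) = diagonal (d ^ k) := by
    rw [Matrix.SpecialLinearGroup.coe_pow, hD, diagonal_pow]
  rw [Matrix.SpecialLinearGroup.coe_mul, Matrix.SpecialLinearGroup.coe_mul,
    coe_inv_of_coe_eq_diagonal hDk, hDk, mul_diagonal, diagonal_mul, Pi.inv_apply, Pi.pow_apply,
    Pi.pow_apply, div_pow]
  ring

theorem eq_or_apply_eq_zero_of_commute [Field K] {D A : Matrix.SpecialLinearGroup n K} {d : n → K}
    (hD : (D : Matrix n n K) = diagonal d) (hDA : Commute D A) (i j : n) :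
    d i = d j ∨ A i j = 0 := by
  have hentry : d i * A i j = A i j * d j := by
    rw [← diagonal_mul, ← mul_diagonal, ← hD, ← Matrix.SpecialLinearGroup.coe_mul, hDA.eq,
      Matrix.SpecialLinearGroup.coe_mul]
  exact mul_eq_mul_right_iff.1 (hentry.trans (mul_comm _ _))

variable [NormedField K] {D A : Matrix.SpecialLinearGroup n K} {d : n → K}

theorem exists_tendsto_conj_diagonal_pow (hD : (D : Matrix n n K) = diagonal d)
    (hcontr : ∀ i j, A i j ≠ 0 → d i = d j ∨ ‖d i‖ < ‖d j‖) :
    ∃ L : Matrix.SpecialLinearGroup n K,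
      Tendsto (fun k : ℕ => D ^ k * A * (D ^ k)⁻¹) atTop (𝓝 L) := by
  have hentry (i j : n) : ∃ l, Tendsto (fun k : ℕ => (d i / d j) ^ k * A i j) atTop (𝓝 l) := by
    have hdj := ne_zero_of_coe_eq_diagonal hD j
    by_cases hAij : A i j = 0
    · exact ⟨0, by simp only [hAij, mul_zero, tendsto_const_nhds]⟩
    rcases hcontr i j hAij with heq | hlt
    · exact ⟨A i j, by simp only [heq, div_self hdj, one_pow, one_mul, tendsto_const_nhds]⟩
    · have hratio : ‖d i / d j‖ < 1 := by
        rwa [norm_div, div_lt_one (norm_pos_iff.2 hdj)]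
      exact ⟨_, (tendsto_pow_atTop_nhds_zero_of_norm_lt_one hratio).mul_const _⟩
  choose M hM using hentry
  have hlim : Tendsto
      (fun k : ℕ => ((D ^ k * A * (D ^ k)⁻¹ : Matrix.SpecialLinearGroup n K) : Matrix n n K))
      atTop (𝓝 (of M)) :=
    tendsto_pi_nhds.2 fun i => tendsto_pi_nhds.2 fun j => by
      simpa only [conj_diagonal_pow_apply hD, of_apply] using hM i j
  have hemb := Matrix.SpecialLinearGroup.isClosedEmbedding_val (n := n) (R := K)
  obtain ⟨L, hL⟩ := hemb.isClosed_range.mem_of_tendsto hlim (.of_forall fun _ => ⟨_, rfl⟩)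
  exact ⟨L, hemb.isInducing.tendsto_nhds_iff.2 (hL ▸ hlim)⟩

variable {Γ : Subgroup (Matrix.SpecialLinearGroup n K)} [DiscreteTopology Γ]

theorem eq_or_apply_eq_zero_of_norm_lt (hD : (D : Matrix n n K) = diagonal d) (hDΓ : D ∈ Γ)
    (hAΓ : A ∈ Γ) (hcontr : ∀ i j, A i j ≠ 0 → d i = d j ∨ ‖d i‖ < ‖d j‖) (i j : n) :
    d i = d j ∨ A i j = 0 := by
  obtain ⟨L, hL⟩ := exists_tendsto_conj_diagonal_pow hD hcontr
  exact eq_or_apply_eq_zero_of_commute hD (commute_of_tendsto_conj_pow hDΓ hAΓ hL) i j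

theorem eq_or_apply_eq_zero_of_norm_gt (hD : (D : Matrix n n K) = diagonal d) (hDΓ : D ∈ Γ)
    (hAΓ : A ∈ Γ) (hexp : ∀ i j, A i j ≠ 0 → d i = d j ∨ ‖d j‖ < ‖d i‖) (i j : n) :
    d i = d j ∨ A i j = 0 := by
  have hcontr (i j : n) (hAij : A i j ≠ 0) : d⁻¹ i = d⁻¹ j ∨ ‖d⁻¹ i‖ < ‖d⁻¹ j‖ := by
    have hdj : 0 < ‖d j‖ := norm_pos_iff.2 (ne_zero_of_coe_eq_diagonal hD j)
    simp only [Pi.inv_apply, norm_inv]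
    exact (hexp i j hAij).imp (congrArg _) (inv_strictAnti₀ hdj)
  exact (eq_or_apply_eq_zero_of_norm_lt (coe_inv_of_coe_eq_diagonal hD) (Γ.inv_mem hDΓ) hAΓ
    hcontr i j).imp_left inv_injective.eq_iff.1

end DiagonalConjugation

theorem stmt_10_general {K : Type*} [NormedField K] (m : K) (hm : ‖m‖ ≠ 1)
    (G : Subgroup SL(2, K)) (hG : DiscreteTopology G)
    (hdiag : ∃ D : SL(2, K), (D : Matrix (Fin 2) (Fin 2) K) = !![m, 0; 0, m⁻¹] ∧ D ∈ G)
    (A : SL(2, K)) (hA : A ∈ G) (htri : A 1 0 = 0 ∨ A 0 1 = 0) : A 1 0 = 0 ∧ A 0 1 = 0 := by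
  obtain ⟨D, hD, hDG⟩ := hdiag
  rw [← diagonal_vec2] at hD
  have hm0 : 0 < ‖m‖ := norm_pos_iff.2 (ne_zero_of_coe_eq_diagonal hD 0)
  have hne : m ≠ m⁻¹ := fun h => by
    rcases self_eq_inv₀.1 h with rfl | rfl | rfl <;> simp at hm hm0
  suffices hoff : ∀ i j, ![m, m⁻¹] i = ![m, m⁻¹] j ∨ A i j = 0 from
    ⟨(hoff 1 0).resolve_left hne.symm, (hoff 0 1).resolve_left hne⟩
  rcases hm.lt_or_gt with hlt | hgt
  · have hinv : ‖m‖ < ‖m‖⁻¹ := hlt.trans ((one_lt_inv₀ hm0).2 hlt)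
    rcases htri with h10 | h01
    · exact eq_or_apply_eq_zero_of_norm_lt hD hDG hA (by simp [Fin.forall_fin_two, h10, hinv])
    · exact eq_or_apply_eq_zero_of_norm_gt hD hDG hA (by simp [Fin.forall_fin_two, h01, hinv])
  · have hinv : ‖m‖⁻¹ < ‖m‖ := (inv_lt_one_of_one_lt₀ hgt).trans hgt
    rcases htri with h10 | h01
    · exact eq_or_apply_eq_zero_of_norm_gt hD hDG hA (by simp [Fin.forall_fin_two, h10, hinv])
    · exact eq_or_apply_eq_zero_of_norm_lt hD hDG hA (by simp [Fin.forall_fin_two, h01, hinv])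

theorem stmt_10 (m : ℝ) (hm : 1 < m) (G : Subgroup (SL(2, ℝ)))
    (hG : DiscreteTopology G)
    (hdiag : ∃ D : SL(2, ℝ), (D : Matrix (Fin 2) (Fin 2) ℝ) = !![m, 0; 0, m⁻¹] ∧ D ∈ G)
    (A : SL(2, ℝ)) (hA : A ∈ G)
    (htri : (A : Matrix (Fin 2) (Fin 2) ℝ) 1 0 = 0 ∨ (A : Matrix (Fin 2) (Fin 2) ℝ) 0 1 = 0) :
    (A : Matrix (Fin 2) (Fin 2) ℝ) 1 0 = 0 ∧ (A : Matrix (Fin 2) (Fin 2) ℝ) 0 1 = 0 :=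
  -- The induced topology on `SL(2, ℝ)` declared above unfolds to the library's subtype topology.
  stmt_10_general m (hm.trans_le (Real.le_norm_self m)).ne' G hG hdiag A hA htri
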